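/- For every integer n ≥ 20, there exist a state T reachable from ₀(n) by Bergman moves and an index i with T i ≥ 1 and (i : ℝ) ≤ −(2n − 3·log_φ n − 8). That is, the leftmost chip can be forced at least 2n − 3·log_φ n − 8 positions to the left of index 0. -/

import Mathlib

noncomputable section

/-- The golden ratio. -/
def phi : ℝ := (1 + Real.sqrt 5) / 2

/-- Base-φ logarithm. -/
def logphi (x : ℝ) : ℝ := Real.logb phi x

/-- A Bergman state: a finitely supported function from ℤ to ℕ. -/
abbrev BState := ℤ →₀ ℕ

/-- A split move at index `i`. -/
def SplitAt (S S' : BState) (i : ℤ) : Prop :=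
  2 ≤ S i ∧
    S' = S - Finsupp.single i 2 + Finsupp.single (i + 1) 1 + Finsupp.single (i - 2) 1

/-- A combine move at index `i`. -/
def CombineAt (S S' : BState) (i : ℤ) : Prop :=
  1 ≤ S i ∧ 1 ≤ S (i + 1) ∧
    S' = S - Finsupp.single i 1 - Finsupp.single (i + 1) 1 + Finsupp.single (i + 2) 1

/-- A move is a split or a combine. -/
def Move (S S' : BState) : Prop := (∃ i, SplitAt S S' i) ∨ (∃ i, CombineAt S S' i)

/-- Terminal state: no move is legal. -/
def Terminal (S : BState) : Prop :=
  (∀ i, S i ≤ 1) ∧ ∀ i, ¬(1 ≤ S i ∧ 1 ≤ S (i + 1))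

/-- A Bergman game of length `m` from `S`. -/
def Game (S : BState) (m : ℕ) (g : ℕ → BState) : Prop :=
  g 0 = S ∧ ∀ j < m, Move (g j) (g (j + 1))

/-- A complete Bergman game of length `m` from `S`. -/
def CompleteGame (S : BState) (m : ℕ) (g : ℕ → BState) : Prop :=
  Game S m g ∧ Terminal (g m)

/-- Reachability by a finite sequence of moves. -/
def Reachable : BState → BState → Prop := Relation.ReflTransGen Move

/-- Reachability by split moves only. -/
def SplitReachable : BState → BState → Prop :=
  Relation.ReflTransGen fun S S' => ∃ i, SplitAt S S' i

/-- The initial state `₀(n)`: `n` chips at index 0. -/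
def initState (n : ℕ) : BState := Finsupp.single 0 n

/-- Total number of chips in a state. -/
def chips (S : BState) : ℕ := S.sum fun _ c => c

open Classical in
/-- The number of split moves among the first `m` steps of `g`. -/
def splitCount (g : ℕ → BState) (m : ℕ) : ℕ :=
  ((Finset.range m).filter fun j => ∃ i, SplitAt (g j) (g (j + 1)) i).card

open Classical in
/-- The number of combine moves among the first `m` steps of `g`. -/
def combineCount (g : ℕ → BState) (m : ℕ) : ℕ :=
  ((Finset.range m).filter fun j => ∃ i, CombineAt (g j) (g (j + 1)) i).card

/-!
Play split moves only, for as long as some index holds two chips. A split keeps the number of chips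
and, since `2 q ^ i = q ^ (i + 1) + q ^ (i - 2)` for both roots `q = φ, ψ` of `q ^ 2 = q + 1`, the
two values `∑ q ^ i` over the chips; it lowers the sum of the indices by one. Hence either chips
are pushed arbitrarily far to the left, or we end in a state `S` with `n` chips on distinct indices
and both values equal to `n`.

In the latter case let `n < φ ^ m`. The `φ`-value forces all indices below `m`. Reading `S` from
its leftmost index `a` upwards, the partial sums of the `ψ`-value, rescaled to the current index
`k`, satisfy `c (k + 1) = S k - φ * c k`. As long as `k ≤ 1 - m`, what lies to the right of `k`
confines `c k` to the open interval `(-φ, 2)`, and the only possible digits are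
`1, 1, 0, 1, 0, 1, …`. So about half of the indices in `[a, 1 - m)` are occupied, while
`[1 - m, m)` holds fewer than `2 m` chips, whence `2 n ≤ (1 - m - a + 2) + 2 (2 m - 1)`.
-/

open scoped goldenRatio
open Finsupp (single)

namespace BState

/-- The value `∑ S i * q ^ i` of a state in base `q`. For `q = φ` it is the number represented by
the state. -/
def baseValue {K : Type*} [Field K] (q : K) : BState →ₗ[ℕ] K :=
  Finsupp.linearCombination ℕ fun i => q ^ i

/-- The sum of the indices of all chips; it drops by one at every split. -/
def indexSum : BState →ₗ[ℕ] ℤ :=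
  Finsupp.linearCombination ℕ id

/-- The part of the `ψ`-value of `S` that lies strictly to the left of `k`, rescaled by
`ψ ^ (1 - k)` so that a chip at `k - 1` contributes `1`. -/
def leftCarry (S : BState) (k : ℤ) : ℝ :=
  baseValue ψ (S.filter (· < k)) * ψ ^ (1 - k)

/-- The part of the `ψ`-value of `S` that lies at or to the right of `k`, on the same scale as
`leftCarry S k`. -/
def rightCarry (S : BState) (k : ℤ) : ℝ :=
  baseValue ψ (S.filter (¬ · < k)) * ψ ^ (1 - k)

theorem chips_eq_degree (S : BState) : chips S = S.degree := rfl

theorem chips_add (S T : BState) : chips (S + T) = chips S + chips T := by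
  simp only [chips_eq_degree, map_add]

theorem chips_single (i : ℤ) (c : ℕ) : chips (single i c) = c := by
  simp only [chips_eq_degree, Finsupp.degree_single]

theorem baseValue_single {K : Type*} [Field K] (q : K) (i : ℤ) (c : ℕ) :
    baseValue q (single i c) = c * q ^ i := by
  simp [baseValue]

theorem indexSum_single (i : ℤ) (c : ℕ) : indexSum (single i c) = c * i := by
  simp [indexSum]

theorem mul_chips_le_indexSum {S : BState} {a : ℤ} (ha : ∀ i ∈ S.support, a ≤ i) :
    a * chips S ≤ indexSum S := by
  rw [indexSum, Finsupp.linearCombination_apply, chips, Finsupp.sum, Finsupp.sum, Nat.cast_sum,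
    Finset.mul_sum]
  refine Finset.sum_le_sum fun i hi => ?_
  rw [nsmul_eq_mul, id, mul_comm]
  exact mul_le_mul_of_nonneg_left (ha i hi) (Nat.cast_nonneg _)

theorem lt_of_baseValue_lt_zpow {K : Type*} [Field K] [LinearOrder K] [IsStrictOrderedRing K]
    {q : K} (hq : 1 < q) {S : BState} {m i : ℤ} (hS : baseValue q S < q ^ m)
    (hi : i ∈ S.support) : i < m := by
  have hq0 : 0 < q := one_pos.trans hq
  refine (zpow_lt_zpow_iff_right₀ hq).1 (lt_of_le_of_lt ?_ hS)
  calc q ^ i ≤ S i • q ^ i :=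
        le_self_nsmul (zpow_pos hq0 i).le (Finsupp.mem_support_iff.1 hi)
    _ ≤ baseValue q S := by
        rw [baseValue, Finsupp.linearCombination_apply]
        exact Finset.single_le_sum (f := fun j => S j • q ^ j) (fun j _ => by positivity) hi

end BState

open BState

section Split

variable {S T : BState} {i : ℤ}

theorem SplitAt.add_single (h : SplitAt S T i) :
    T + single i 2 = S + single (i + 1) 1 + single (i - 2) 1 := by
  obtain ⟨hi, rfl⟩ := h
  have hS : S - single i 2 + single i 2 = S := tsub_add_cancel_of_le (by simpa using hi)
  nth_rw 2 [← hS]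
  simp only [add_right_comm _ (single i 2)]

theorem SplitAt.chips_eq (h : SplitAt S T i) : chips T = chips S := by
  have := congrArg chips h.add_single
  simp only [chips_add, chips_single] at this
  omega

theorem SplitAt.indexSum_eq (h : SplitAt S T i) : indexSum T = indexSum S - 1 := by
  have := congrArg indexSum h.add_single
  simp only [map_add, indexSum_single] at this
  push_cast at this
  linarith

theorem zpow_add_one_add_zpow_sub_two {K : Type*} [Field K] {q : K} (hq : q ^ 2 = q + 1) (i : ℤ) :
    q ^ (i + 1) + q ^ (i - 2) = 2 * q ^ i := by
  have hq0 : q ≠ 0 := by rintro rfl; simp at hq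
  have hi : q ^ i = q ^ (i - 2) * q ^ 2 := by rw [← zpow_natCast, ← zpow_add₀ hq0]; simp
  rw [zpow_add_one₀ hq0, hi]
  linear_combination q ^ (i - 2) * (q - 1) * hq

theorem SplitAt.baseValue_eq {K : Type*} [Field K] {q : K} (hq : q ^ 2 = q + 1)
    (h : SplitAt S T i) : baseValue q T = baseValue q S := by
  have := congrArg (baseValue q) h.add_single
  simp only [map_add, baseValue_single] at this
  push_cast at this
  linear_combination this + zpow_add_one_add_zpow_sub_two hq i

theorem SplitReachable.chips_eq (h : SplitReachable S T) : chips T = chips S := by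
  induction h with
  | refl => rfl
  | tail _ hmove ih =>
    obtain ⟨_, hsplit⟩ := hmove
    exact hsplit.chips_eq.trans ih

theorem SplitReachable.baseValue_eq {K : Type*} [Field K] {q : K} (hq : q ^ 2 = q + 1)
    (h : SplitReachable S T) : baseValue q T = baseValue q S := by
  induction h with
  | refl => rfl
  | tail _ hmove ih =>
    obtain ⟨_, hsplit⟩ := hmove
    exact (hsplit.baseValue_eq hq).trans ih

theorem SplitReachable.reachable (h : SplitReachable S T) : Reachable S T :=
  Relation.ReflTransGen.mono (fun _ _ => Or.inl) _ _ h

theorem exists_splitReachable_lt_or_le_one (S : BState) (a : ℤ) :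
    ∃ T, SplitReachable S T ∧ ((∃ i ∈ T.support, i < a) ∨ ∀ i, T i ≤ 1) := by
  induction hN : (indexSum S - a * chips S + 1).toNat using Nat.strong_induction_on
    generalizing S with
  | _ N ih =>
  by_cases hdone : (∃ i ∈ S.support, i < a) ∨ ∀ i, S i ≤ 1
  · exact ⟨S, .refl, hdone⟩
  push Not at hdone
  obtain ⟨ha, i, hi⟩ := hdone
  obtain ⟨S', hsplit⟩ : ∃ S', SplitAt S S' i := ⟨_, hi, rfl⟩
  have hnonneg := mul_chips_le_indexSum ha
  have hdecr : (indexSum S' - a * chips S' + 1).toNat < N := by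
    rw [hsplit.indexSum_eq, hsplit.chips_eq]
    omega
  obtain ⟨T, hT, hdone⟩ := ih _ hdecr S' rfl
  exact ⟨T, .head ⟨i, hsplit⟩ hT, hdone⟩

end Split

namespace BState

section Carry

theorem filter_lt_add_one (S : BState) (k : ℤ) :
    S.filter (· < k + 1) = S.filter (· < k) + single k (S k) := by
  ext i
  simp only [Finsupp.filter_apply, Finsupp.add_apply, Finsupp.single_apply]
  grind

theorem leftCarry_add_one (S : BState) (k : ℤ) :
    leftCarry S (k + 1) = S k - φ * leftCarry S k := by
  have hscale : ψ ^ (1 - (k + 1)) = -φ * ψ ^ (1 - k) := by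
    rw [← Real.inv_goldenConj, ← zpow_neg_one, ← zpow_add₀ Real.goldenConj_ne_zero]
    congr 1; ring
  have hunit : ψ ^ k * ψ ^ (1 - (k + 1)) = 1 := by
    rw [← zpow_add₀ Real.goldenConj_ne_zero]; simp
  rw [leftCarry, leftCarry, filter_lt_add_one, map_add, baseValue_single]
  linear_combination S k * hunit + baseValue ψ (S.filter (· < k)) * hscale

theorem leftCarry_add_rightCarry (S : BState) (k : ℤ) :
    leftCarry S k + rightCarry S k = baseValue ψ S * ψ ^ (1 - k) := by
  rw [leftCarry, rightCarry, ← add_mul, ← map_add, Finsupp.filter_add_filter_not]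

theorem rightCarry_eq_goldenConj_mul (S : BState) (k : ℤ) :
    rightCarry S k = ψ * (S k + rightCarry S (k + 1)) := by
  have hψ := Real.goldenConj_ne_zero
  have hscale : ψ ^ (1 - k) = ψ * ψ ^ (1 - (k + 1)) := by
    rw [← zpow_one_add₀ hψ]; congr 1; ring
  linear_combination leftCarry_add_rightCarry S k - ψ * leftCarry_add_rightCarry S (k + 1)
    + baseValue ψ S * hscale + ψ * leftCarry_add_one S k
    - leftCarry S k * Real.goldenRatio_mul_goldenConj

theorem rightCarry_eq_zero {S : BState} {k : ℤ} (hk : ∀ i ∈ S.support, i < k) :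
    rightCarry S k = 0 := by
  have hempty : S.filter (¬ · < k) = 0 :=
    (Finsupp.filter_eq_zero_iff _ _).2 fun i hki =>
      Finsupp.notMem_support_iff.1 fun hi => hki (hk i hi)
  rw [rightCarry, hempty, map_zero, zero_mul]

variable {S : BState}

theorem rightCarry_mem_Icc (hS : ∀ i, S i ≤ 1) (k : ℤ) :
    rightCarry S k ∈ Set.Icc (-1) (-ψ) := by
  have hψ := Real.goldenConj_neg
  obtain ⟨N, hkN, hN⟩ : ∃ N, k ≤ N ∧ ∀ i ∈ S.support, i < N := by
    obtain ⟨M, hM⟩ := S.support.exists_le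
    exact ⟨max k (M + 1), le_max_left .., fun i hi => by have := hM i hi; omega⟩
  induction k, hkN using Int.leInductionDown with
  | base =>
    rw [rightCarry_eq_zero hN]
    constructor <;> linarith
  | pred k _ ih =>
    have hdigit : (S (k - 1) : ℝ) ≤ 1 := by exact_mod_cast hS (k - 1)
    have hdigit_nonneg : (0 : ℝ) ≤ S (k - 1) := Nat.cast_nonneg _
    rw [rightCarry_eq_goldenConj_mul, sub_add_cancel]
    constructor
    · calc -1 = ψ * (1 + -ψ) := by linear_combination Real.goldenConj_sq
        _ ≤ ψ * (S (k - 1) + rightCarry S k) :=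
          mul_le_mul_of_nonpos_left (add_le_add hdigit ih.2) hψ.le
    · calc ψ * (S (k - 1) + rightCarry S k) ≤ ψ * (0 + -1) :=
          mul_le_mul_of_nonpos_left (add_le_add hdigit_nonneg ih.1) hψ.le
        _ = -ψ := by ring

theorem leftCarry_mem_Ioo (hS : ∀ i, S i ≤ 1) {k : ℤ} (hk : |baseValue ψ S| < φ ^ (1 - k)) :
    leftCarry S k ∈ Set.Ioo (-φ) 2 := by
  have hscale : |baseValue ψ S * ψ ^ (1 - k)| < 1 := by
    have habs : |ψ| = φ⁻¹ := by rw [Real.inv_goldenRatio, abs_of_neg Real.goldenConj_neg]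
    rw [abs_mul, abs_zpow, habs, inv_zpow, ← div_eq_mul_inv,
      div_lt_one (zpow_pos Real.goldenRatio_pos _)]
    exact hk
  obtain ⟨hlow, hupp⟩ := abs_lt.1 hscale
  obtain ⟨hlow', hupp'⟩ := rightCarry_mem_Icc hS k
  have hsum := leftCarry_add_rightCarry S k
  have hconj := Real.one_sub_goldenRatio
  constructor <;> linarith

end Carry

section Counting

variable {S : BState}

theorem filter_lt_eq_zero {a : ℤ} (ha : ∀ i ∈ S.support, a ≤ i) : S.filter (· < a) = 0 :=
  (Finsupp.filter_eq_zero_iff _ _).2 fun i hia =>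
    Finsupp.notMem_support_iff.1 fun hi => hia.not_ge (ha i hi)

theorem chips_filter_lt_add_one (S : BState) (k : ℤ) :
    chips (S.filter (· < k + 1)) = chips (S.filter (· < k)) + S k := by
  rw [filter_lt_add_one, chips_add, chips_single]

theorem chips_filter_lt_le_add_sub (hS : ∀ i, S i ≤ 1) {k l : ℤ} (hkl : k ≤ l) :
    (chips (S.filter (· < l)) : ℤ) ≤ chips (S.filter (· < k)) + (l - k) := by
  induction l, hkl using Int.leInduction with
  | base => simp
  | succ l _ ih =>
    have := hS l
    rw [chips_filter_lt_add_one]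
    omega

theorem leftCarry_trichotomy (hS : ∀ i, S i ≤ 1) {a k : ℤ}
    (ha : ∀ i ∈ S.support, a ≤ i) (hak : a ≤ k) (hk : |baseValue ψ S| < φ ^ (1 - k)) :
    (leftCarry S k = 0 ∧ chips (S.filter (· < k)) = 0) ∨
    (leftCarry S k = 1 ∧ 2 * (chips (S.filter (· < k)) : ℤ) ≤ k - a + 1) ∨
    (leftCarry S k = ψ ∧ 2 * (chips (S.filter (· < k)) : ℤ) ≤ k - a + 2) := by
  induction k, hak using Int.leInduction with
  | base => simp [leftCarry, filter_lt_eq_zero ha, chips]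
  | succ k hak ih =>
    have hk' : |baseValue ψ S| < φ ^ (1 - k) :=
      hk.trans_le (zpow_le_zpow_right₀ Real.one_lt_goldenRatio.le (by omega))
    obtain ⟨hlow, hupp⟩ := leftCarry_mem_Ioo hS hk
    have hcarry := leftCarry_add_one S k
    have hφψ := Real.goldenRatio_mul_goldenConj
    have hconj := Real.one_sub_goldenConj
    have hdigit : S k = 0 ∨ S k = 1 := by have := hS k; omega
    rw [chips_filter_lt_add_one]
    -- The digit `0` after the carry `1` would give the carry `-φ`, and the digit `1` after the
    -- carry `ψ` would give `2`; both are outside the open interval.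
    rcases ih hk' with ⟨hc, hcount⟩ | ⟨hc, hcount⟩ | ⟨hc, hcount⟩ <;>
      rcases hdigit with hd | hd <;> rw [hc, hd] at hcarry <;> push_cast at hcarry
    · exact .inl ⟨by linarith, by omega⟩
    · exact .inr (.inl ⟨by linarith, by omega⟩)
    · linarith
    · exact .inr (.inr ⟨by linarith, by omega⟩)
    · exact .inr (.inl ⟨by linarith, by omega⟩)
    · linarith

theorem two_mul_chips_le (hS : ∀ i, S i ≤ 1) {m a : ℤ} (hm : 1 ≤ m) (ham : a ≤ m)
    (hφ : baseValue φ S < φ ^ m) (hψ : |baseValue ψ S| < φ ^ m)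
    (ha : ∀ i ∈ S.support, a ≤ i) : 2 * (chips S : ℤ) ≤ 3 * m + 1 - a := by
  have hall : S.filter (· < m) = S :=
    (Finsupp.filter_eq_self_iff _ _).2 fun i hi =>
      lt_of_baseValue_lt_zpow Real.one_lt_goldenRatio hφ (Finsupp.mem_support_iff.2 hi)
  rcases le_total a (1 - m) with hcase | hcase
  · have hright := chips_filter_lt_le_add_sub hS (k := 1 - m) (l := m) (by omega)
    have hleft := leftCarry_trichotomy hS ha hcase (by simpa using hψ)
    rw [hall] at hright
    omega
  · have hright := chips_filter_lt_le_add_sub hS ham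
    rw [hall, filter_lt_eq_zero ha, chips_eq_degree 0, map_zero] at hright
    omega

theorem exists_mem_support_le_of_le_one (hS : ∀ i, S i ≤ 1) (hS0 : S ≠ 0) {m : ℤ} (hm : 1 ≤ m)
    (hφ : baseValue φ S < φ ^ m) (hψ : |baseValue ψ S| < φ ^ m) :
    ∃ i ∈ S.support, i ≤ 3 * m + 1 - 2 * (chips S : ℤ) := by
  have hne : S.support.Nonempty := Finsupp.support_nonempty_iff.2 hS0
  have hmem := S.support.min'_mem hne
  refine ⟨S.support.min' hne, hmem, ?_⟩
  have hlt := lt_of_baseValue_lt_zpow Real.one_lt_goldenRatio hφ hmem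
  have := two_mul_chips_le hS hm hlt.le hφ hψ fun i hi => S.support.min'_le i hi
  omega

end Counting

end BState

theorem exists_splitReachable_initState_mem_support_le {n : ℕ} (hn : 1 ≤ n) {m : ℤ}
    (hnm : (n : ℝ) < φ ^ m) :
    ∃ T, SplitReachable (initState n) T ∧ ∃ i ∈ T.support, i ≤ 3 * m + 1 - 2 * (n : ℤ) := by
  obtain ⟨T, hT, ⟨i, hi, hlt⟩ | hT1⟩ :=
    exists_splitReachable_lt_or_le_one (initState n) (3 * m + 1 - 2 * n)
  · exact ⟨T, hT, i, hi, hlt.le⟩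
  have hchips : chips T = n := by rw [hT.chips_eq, initState, chips_single]
  have hvalue {q : ℝ} (hq : q ^ 2 = q + 1) : baseValue q T = n := by
    rw [hT.baseValue_eq hq, initState, baseValue_single, zpow_zero, mul_one]
  have hT0 : T ≠ 0 := by rintro rfl; exact Nat.one_le_iff_ne_zero.1 hn hchips.symm
  have hm : 0 < m :=
    (one_lt_zpow_iff_right₀ Real.one_lt_goldenRatio).1
      (lt_of_le_of_lt (by exact_mod_cast hn) hnm)
  refine ⟨T, hT, hchips ▸ exists_mem_support_le_of_le_one hT1 hT0 hm ?_ ?_⟩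
  · rwa [hvalue Real.goldenRatio_sq]
  · rwa [hvalue Real.goldenConj_sq, Nat.abs_cast]

theorem phi_eq_goldenRatio : phi = φ := rfl

theorem lt_goldenRatio_zpow_floor_logphi_add_one {x : ℝ} (hx : 0 < x) :
    x < φ ^ (⌊logphi x⌋ + 1) := by
  rw [logphi, phi_eq_goldenRatio, ← Real.rpow_intCast,
    ← Real.logb_lt_iff_lt_rpow Real.one_lt_goldenRatio hx, Int.cast_add, Int.cast_one]
  exact Int.lt_floor_add_one _

theorem bergman_leftmost_reached_general (n : ℕ) (hn : 1 ≤ n) :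
    ∃ (T : BState) (i : ℤ), SplitReachable (initState n) T ∧ 1 ≤ T i ∧
      (i : ℝ) ≤ -(2 * (n : ℝ) - 3 * logphi n - 4) := by
  have hn0 : (0 : ℝ) < n := by exact_mod_cast hn
  obtain ⟨T, hT, i, hi, hle⟩ := exists_splitReachable_initState_mem_support_le hn
    (lt_goldenRatio_zpow_floor_logphi_add_one hn0)
  refine ⟨T, i, hT, Nat.one_le_iff_ne_zero.2 (Finsupp.mem_support_iff.1 hi), ?_⟩
  have hle' : (i : ℝ) ≤ 3 * (⌊logphi n⌋ + 1) + 1 - 2 * n := by exact_mod_cast hle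
  linarith [Int.floor_le (logphi n)]

/-- For `n ≥ 20` there is a state reachable from `₀(n)` with a chip at an index at most
`−(2n − 3·log_φ n − 8)`. -/
theorem bergman_leftmost_reached (n : ℕ) (hn : 20 ≤ n) :
    ∃ (T : BState) (i : ℤ), Reachable (initState n) T ∧ 1 ≤ T i ∧
      (i : ℝ) ≤ -(2 * (n : ℝ) - 3 * logphi n - 8) := by
  obtain ⟨T, i, hT, hi, hle⟩ := bergman_leftmost_reached_general n (by omega)
  exact ⟨T, i, hT.reachable, hi, by linarith⟩
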